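/- Let n be a natural number, let g_i be a real number (score) for each i ∈ {1, …, n}, for each i let E_i ⊆ {1, …, n} be a set of indices, and let M_{ij} ≥ 0 be real weights satisfying ∑_{j∈E_i} M_{ij} ≤ 1 for every i. Then ∑_{i=1}^n ∑_{j∈E_i} M_{ij} · 𝕀(g_i < g_j) ≤ ∑_{i=1}^n ∑_{j∈E_i} M_{ij} · log₂(1 + exp(g_j − g_i)) ≤ ∑_{i=1}^n log₂(1 + ∑_{j∈E_i} M_{ij} · exp(g_j − g_i)), where 𝕀(g_i < g_j) equals 1 if g_i < g_j and 0 otherwise. -/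

import Mathlib

section Jensen

variable {𝕜 E β ι : Type*} [Field 𝕜] [LinearOrder 𝕜] [IsStrictOrderedRing 𝕜]
  [AddCommGroup E] [Module 𝕜 E]
  [AddCommGroup β] [PartialOrder β] [IsOrderedAddMonoid β] [Module 𝕜 β] [IsStrictOrderedModule 𝕜 β]

-- The missing mass `1 - ∑ j ∈ t, w j` is placed at `0`, where `f` is nonnegative.
theorem sum_smul_le_map_sum_smul_of_concaveOn {s : Set E} {f : E → β} {t : Finset ι}
    {w : ι → 𝕜} {p : ι → E} (hf : ConcaveOn 𝕜 s f) (h0 : 0 ∈ s) (hf0 : 0 ≤ f 0)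
    (hw : ∀ j ∈ t, 0 ≤ w j) (hw1 : ∑ j ∈ t, w j ≤ 1) (hp : ∀ j ∈ t, p j ∈ s) :
    ∑ j ∈ t, w j • f (p j) ≤ f (∑ j ∈ t, w j • p j) := by
  have hmass : 0 ≤ 1 - ∑ j ∈ t, w j := sub_nonneg.2 hw1
  calc ∑ j ∈ t, w j • f (p j)
      ≤ (1 - ∑ j ∈ t, w j) • f 0 + ∑ j ∈ t, w j • f (p j) :=
        le_add_of_nonneg_left (smul_nonneg hmass hf0)
    _ ≤ f ((1 - ∑ j ∈ t, w j) • 0 + ∑ j ∈ t, w j • p j) :=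
        hf.map_add_sum_le hw (sub_add_cancel _ _) hp hmass h0
    _ = f (∑ j ∈ t, w j • p j) := by rw [smul_zero, zero_add]

end Jensen

section Logb

open Real

variable {b : ℝ}

theorem concaveOn_logb_one_add (hb : 1 < b) :
    ConcaveOn ℝ (Set.Ioi (-1)) fun x ↦ logb b (1 + x) := by
  have hlog : ConcaveOn ℝ (Set.Ioi (-1)) fun x ↦ log (1 + x) := by
    simpa only [Set.preimage_const_add_Ioi, zero_sub, Function.comp_def]
      using strictConcaveOn_log_Ioi.concaveOn.translate_right 1
  simpa only [smul_eq_mul, inv_mul_eq_div, log_div_log]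
    using hlog.smul (inv_nonneg.2 (log_pos hb).le)

theorem sum_mul_logb_one_add_le {ι : Type*} {t : Finset ι} {w x : ι → ℝ} (hb : 1 < b)
    (hw : ∀ j ∈ t, 0 ≤ w j) (hw1 : ∑ j ∈ t, w j ≤ 1) (hx : ∀ j ∈ t, -1 < x j) :
    ∑ j ∈ t, w j * logb b (1 + x j) ≤ logb b (1 + ∑ j ∈ t, w j * x j) :=
  sum_smul_le_map_sum_smul_of_concaveOn (concaveOn_logb_one_add hb)
    (Set.mem_Ioi.2 neg_one_lt_zero) (by rw [add_zero, logb_one]) hw hw1 hx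

theorem ite_pos_le_logb_one_add_exp (hb : 1 < b) (hb2 : b ≤ 2) (x : ℝ) :
    (if 0 < x then (1 : ℝ) else 0) ≤ logb b (1 + exp x) := by
  split_ifs with hx
  · have hbx : b ≤ 1 + exp x := by linarith [one_le_exp hx.le]
    rwa [le_logb_iff_rpow_le hb (by positivity), rpow_one]
  · exact logb_nonneg hb (le_add_of_nonneg_right (exp_pos x).le)

end Logb

theorem rspo_chain_general {ι : Type*} {b : ℝ} (hb : 1 < b) (hb2 : b ≤ 2) (s : Finset ι)
    (g : ι → ℝ) (E : ι → Finset ι) (M : ι → ι → ℝ)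
    (hM : ∀ i ∈ s, ∀ j ∈ E i, 0 ≤ M i j) (hMsum : ∀ i ∈ s, ∑ j ∈ E i, M i j ≤ 1) :
    (∑ i ∈ s, ∑ j ∈ E i, M i j * (if g i < g j then (1 : ℝ) else 0)) ≤
        ∑ i ∈ s, ∑ j ∈ E i, M i j * Real.logb b (1 + Real.exp (g j - g i)) ∧
    (∑ i ∈ s, ∑ j ∈ E i, M i j * Real.logb b (1 + Real.exp (g j - g i))) ≤
        ∑ i ∈ s, Real.logb b (1 + ∑ j ∈ E i, M i j * Real.exp (g j - g i)) := by
  constructor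
  · refine Finset.sum_le_sum fun i hi ↦ Finset.sum_le_sum fun j hj ↦
      mul_le_mul_of_nonneg_left ?_ (hM i hi j hj)
    simpa only [sub_pos] using ite_pos_le_logb_one_add_exp hb hb2 (g j - g i)
  · exact Finset.sum_le_sum fun i hi ↦ sum_mul_logb_one_add_le hb (hM i hi) (hMsum i hi)
      fun j _ ↦ neg_one_lt_zero.trans (Real.exp_pos (g j - g i))

/-- RSPO upper-bound chain over a list of `n` items: for scores `g i`, index sets `E i`, and
nonnegative weights `M i j` with `∑ j ∈ E i, M i j ≤ 1` for every `i`,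
`∑ i ∑ j ∈ E i, M i j * 𝕀(g i < g j) ≤ ∑ i ∑ j ∈ E i, M i j * log₂ (1 + exp (g j − g i))
  ≤ ∑ i, log₂ (1 + ∑ j ∈ E i, M i j * exp (g j − g i))`. -/
theorem rspo_chain (n : ℕ) (g : Fin n → ℝ) (E : Fin n → Finset (Fin n))
    (M : Fin n → Fin n → ℝ)
    (hM : ∀ i, ∀ j ∈ E i, 0 ≤ M i j) (hMsum : ∀ i, ∑ j ∈ E i, M i j ≤ 1) :
    (∑ i, ∑ j ∈ E i, M i j * (if g i < g j then (1 : ℝ) else 0)) ≤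
        ∑ i, ∑ j ∈ E i, M i j * Real.logb 2 (1 + Real.exp (g j - g i)) ∧
    (∑ i, ∑ j ∈ E i, M i j * Real.logb 2 (1 + Real.exp (g j - g i))) ≤
        ∑ i, Real.logb 2 (1 + ∑ j ∈ E i, M i j * Real.exp (g j - g i)) :=
  rspo_chain_general one_lt_two le_rfl Finset.univ g E M (fun i _ ↦ hM i) fun i _ ↦ hMsum i
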